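/- Let 1 ≤ p < ∞, let X ⊂ L^p_+(ℝⁿ), let T : 𝒱(ℝⁿ) → 𝒱(ℝⁿ) be a rearrangement, and let 𝒲 be a family of rearrangements from 𝒱(ℝⁿ) to 𝒱(ℝⁿ). Then T is weakly approximable in Lᵖ on X by maps in 𝒲 if and only if T is weakly approximable in Lᵖ on cl_p X, the closure of X in the Lᵖ norm, by maps in 𝒲. The same equivalence holds with 'weakly approximable' replaced throughout by 'approximable' or by 'sequentially approximable'. -/

import Mathlib

open MeasureTheory Filter Topology
open scoped ENNReal

noncomputable section

abbrev Euc (n : ℕ) : Type := EuclideanSpace ℝ (Fin n)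

/-- Membership in `𝒱(ℝⁿ)`: nonnegative measurable functions vanishing at infinity. -/
def inV {n : ℕ} (f : Euc n → ℝ) : Prop :=
  Measurable f ∧ 0 ≤ f ∧ ∀ t : ℝ, 0 < t → volume {x | t < f x} ≠ ⊤

/-- A rearrangement: a map of `𝒱(ℝⁿ)` to itself that is equimeasurable and monotonic. -/
def IsRearrangement {n : ℕ} (T : (Euc n → ℝ) → Euc n → ℝ) : Prop :=
  (∀ f, inV f → inV (T f)) ∧
  (∀ f, inV f → ∀ t : ℝ, volume {x | t < T f x} = volume {x | t < f x}) ∧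
  (∀ f g, inV f → inV g → (∀ᵐ x ∂volume, f x ≤ g x) →
    ∀ᵐ x ∂volume, T f x ≤ T g x)

/-- Membership in `L^p_+(ℝⁿ)`. -/
def inLpPlus {n : ℕ} (p : ℝ≥0∞) (f : Euc n → ℝ) : Prop :=
  Measurable f ∧ 0 ≤ f ∧ eLpNorm f p volume ≠ ⊤

/-- The closure of `X` in the `Lᵖ` norm. -/
def clLp {n : ℕ} (p : ℝ≥0∞) (X : Set (Euc n → ℝ)) : Set (Euc n → ℝ) :=
  {f | inLpPlus p f ∧ ∀ ε : ℝ≥0∞, 0 < ε → ∃ g ∈ X, eLpNorm (f - g) p volume < ε}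

/-- `T` is weakly approximable in `Lᵖ` on `Y` by maps in `𝒲`. -/
def WeakApproxLp {n : ℕ} (p : ℝ≥0∞) (T : (Euc n → ℝ) → Euc n → ℝ)
    (𝒲 : Set ((Euc n → ℝ) → Euc n → ℝ)) (Y : Set (Euc n → ℝ)) : Prop :=
  ∀ f ∈ Y, ∃ S : ℕ → (Euc n → ℝ) → Euc n → ℝ, (∀ k, S k ∈ 𝒲) ∧
    Tendsto (fun k => eLpNorm (S k f - T f) p volume) atTop (𝓝 0)

/-- `T` is approximable in `Lᵖ` on `Y` by maps in `𝒲`. -/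
def ApproxLp {n : ℕ} (p : ℝ≥0∞) (T : (Euc n → ℝ) → Euc n → ℝ)
    (𝒲 : Set ((Euc n → ℝ) → Euc n → ℝ)) (Y : Set (Euc n → ℝ)) : Prop :=
  ∃ S : ℕ → (Euc n → ℝ) → Euc n → ℝ, (∀ k, S k ∈ 𝒲) ∧
    ∀ f ∈ Y, Tendsto (fun k => eLpNorm (S k f - T f) p volume) atTop (𝓝 0)

/-- `S k ∘ ⋯ ∘ S 0`, the composition of the first `k + 1` maps of a sequence. -/
def seqComp {α : Type*} (S : ℕ → α → α) : ℕ → α → α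
  | 0 => S 0
  | k + 1 => S (k + 1) ∘ seqComp S k

/-- `T` is sequentially approximable in `Lᵖ` on `Y` by maps in `𝒲`. -/
def SeqApproxLp {n : ℕ} (p : ℝ≥0∞) (T : (Euc n → ℝ) → Euc n → ℝ)
    (𝒲 : Set ((Euc n → ℝ) → Euc n → ℝ)) (Y : Set (Euc n → ℝ)) : Prop :=
  ∃ S : ℕ → (Euc n → ℝ) → Euc n → ℝ, (∀ k, S k ∈ 𝒲) ∧
    ∀ f ∈ Y, Tendsto (fun k => eLpNorm (seqComp S k f - T f) p volume) atTop (𝓝 0)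


lemma lpPlus_inV {n : ℕ} {p : ℝ≥0∞} (hp1 : 1 ≤ p) (hp2 : p ≠ ⊤) {f : Euc n → ℝ}
    (hf : inLpPlus p f) : inV f := by
  obtain ⟨h1, h2, h3⟩ := hf
  refine ⟨h1, h2, fun t ht => ?_⟩
  have hm : MemLp f p volume := ⟨h1.aestronglyMeasurable, lt_top_iff_ne_top.2 h3⟩
  have hp0 : p ≠ 0 := (lt_of_lt_of_le zero_lt_one hp1).ne'
  have h := hm.meas_ge_lt_top hp0 hp2 (ε := t.toNNReal) (by simpa using ht)
  refine ne_top_of_le_ne_top h.ne (measure_mono ?_)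
  intro x hx
  have hx' : t < f x := hx
  show t.toNNReal ≤ ‖f x‖₊
  rw [← NNReal.coe_le_coe]
  simp only [Real.coe_toNNReal', coe_nnnorm, Real.norm_eq_abs]
  exact max_le (hx'.le.trans (le_abs_self _)) (abs_nonneg _)

lemma rearr_comp {n : ℕ} {S T : (Euc n → ℝ) → Euc n → ℝ} (hS : IsRearrangement S)
    (hT : IsRearrangement T) : IsRearrangement (S ∘ T) := by
  refine ⟨fun f hf => hS.1 _ (hT.1 f hf), fun f hf t => ?_, fun f g hf hg h => ?_⟩
  · exact (hS.2.1 _ (hT.1 f hf) t).trans (hT.2.1 f hf t)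
  · exact hS.2.2 _ _ (hT.1 f hf) (hT.1 g hg) (hT.2.2 f g hf hg h)

/-- The cut-off of `f` at level `s`. -/
def cutAt {n : ℕ} (f : Euc n → ℝ) (s : ℝ) : Euc n → ℝ := {x | s < f x}.indicator f

lemma cutAt_inV {n : ℕ} {f : Euc n → ℝ} (hf : inV f) (s : ℝ) : inV (cutAt f s) := by
  refine ⟨hf.1.indicator (measurableSet_lt measurable_const hf.1),
    fun x => Set.indicator_nonneg (fun y _ => hf.2.1 y) x, fun t ht => ?_⟩
  refine ne_top_of_le_ne_top (hf.2.2 t ht) (measure_mono ?_)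
  intro x hx
  exact lt_of_lt_of_le hx (Set.indicator_le_self' (fun y _ => hf.2.1 y) x)

lemma cutAt_pos {n : ℕ} {f : Euc n → ℝ} {s : ℝ} (hs : 0 < s) (x : Euc n) :
    0 < cutAt f s x ↔ s < f x := by
  unfold cutAt
  by_cases h : s < f x
  · rw [Set.indicator_of_mem (show x ∈ {x | s < f x} from h)]; exact ⟨fun _ => h, fun _ => hs.trans h⟩
  · rw [Set.indicator_of_notMem (show x ∉ {x | s < f x} from h)]; simp [h]

lemma cutAt_gt {n : ℕ} {f : Euc n → ℝ} {s : ℝ} (hs : 0 < s) (x : Euc n) :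
    s < cutAt f s x ↔ s < f x := by
  unfold cutAt
  by_cases h : s < f x
  · rw [Set.indicator_of_mem (show x ∈ {x | s < f x} from h)]
  · rw [Set.indicator_of_notMem (show x ∉ {x | s < f x} from h)]; simp [h, hs.le]

lemma cutAt_T {n : ℕ} {T : (Euc n → ℝ) → Euc n → ℝ} (hT : IsRearrangement T)
    {f : Euc n → ℝ} (hf : inV f) {s : ℝ} (hs : 0 < s) :
    ∀ᵐ x ∂volume, 0 < T (cutAt f s) x → s < T f x := by
  have hc := cutAt_inV hf s
  have hTc := hT.1 _ hc
  -- first: positive implies above s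
  have e1 : volume {x | 0 < T (cutAt f s) x} = volume {x | s < T (cutAt f s) x} := by
    rw [hT.2.1 _ hc, hT.2.1 _ hc]
    simp only [cutAt_pos hs, cutAt_gt hs]
  have fin : volume {x | s < T (cutAt f s) x} ≠ ⊤ := hTc.2.2 s hs
  have e2 : {x | s < T (cutAt f s) x} =ᵐ[volume] {x | 0 < T (cutAt f s) x} := by
    apply ae_eq_of_subset_of_measure_ge
    · intro x hx; exact hs.trans hx
    · exact e1.le
    · exact (measurableSet_lt measurable_const hTc.1).nullMeasurableSet
    · rw [e1]; exact fin
  have le := hT.2.2 (cutAt f s) f hc hf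
    (ae_of_all _ fun x => Set.indicator_le_self' (fun y _ => hf.2.1 y) x)
  filter_upwards [e2.mem_iff, le] with x h1 h2 h3
  exact lt_of_lt_of_le (h1.2 h3) h2

lemma inter_le {n : ℕ} {T : (Euc n → ℝ) → Euc n → ℝ} (hT : IsRearrangement T)
    {f g : Euc n → ℝ} (hf : inV f) (hg : inV g) {s t : ℝ} (hs : 0 < s) (ht : 0 < t) :
    volume {x | s < f x ∧ t < g x} ≤ volume {x | s < T f x ∧ t < T g x} := by
  have hcf := cutAt_inV hf s
  have hcg := cutAt_inV hg t
  let m : Euc n → ℝ := fun x => min (cutAt f s x) (cutAt g t x)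
  have hm : inV m := by
    refine ⟨hcf.1.min hcg.1, fun x => le_min (hcf.2.1 x) (hcg.2.1 x), fun u hu => ?_⟩
    refine ne_top_of_le_ne_top (hcf.2.2 u hu) (measure_mono ?_)
    intro x hx
    have hx2 : u < m x := hx
    exact lt_of_lt_of_le hx2 (min_le_left _ _)
  have e : {x | s < f x ∧ t < g x} = {x | 0 < m x} := by
    ext x
    simp only [Set.mem_ofPred_eq, m, lt_min_iff, cutAt_pos hs, cutAt_pos ht]
  rw [e, ← hT.2.1 m hm 0]
  apply measure_mono_ae
  filter_upwards [cutAt_T hT hf hs, cutAt_T hT hg ht,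
    hT.2.2 m _ hm hcf (ae_of_all _ fun x => min_le_left _ _),
    hT.2.2 m _ hm hcg (ae_of_all _ fun x => min_le_right _ _)] with x h1 h2 h3 h4 h5
  exact ⟨h1 (lt_of_lt_of_le h5 h3), h2 (lt_of_lt_of_le h5 h4)⟩

lemma diff_le {n : ℕ} {T : (Euc n → ℝ) → Euc n → ℝ} (hT : IsRearrangement T)
    {f g : Euc n → ℝ} (hf : inV f) (hg : inV g) {s t : ℝ} (hs : 0 < s) (ht : 0 < t) :
    volume {x | s < T f x ∧ ¬ t < T g x} ≤ volume {x | s < f x ∧ ¬ t < g x} := by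
  have key : ∀ u v : Euc n → ℝ, inV u → inV v →
      volume {x | s < u x ∧ t < v x} + volume {x | s < u x ∧ ¬ t < v x} = volume {x | s < u x} := by
    intro u v hu hv
    exact measure_inter_add_sdiff {x | s < u x} (measurableSet_lt measurable_const hv.1)
  have k1 := key f g hf hg
  have k2 := key (T f) (T g) (hT.1 f hf) (hT.1 g hg)
  rw [hT.2.1 f hf, ← k1] at k2
  have hi := inter_le hT hf hg hs ht
  have fin : volume {x | s < f x ∧ t < g x} ≠ ⊤ :=
    ne_top_of_le_ne_top (hf.2.2 s hs) (measure_mono fun x hx => hx.1)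
  refine (ENNReal.add_le_add_iff_left fin).1 ?_
  rw [← k2]
  gcongr

lemma slice {a b r : ℝ} (hb : 0 ≤ b) :
    ∫⁻ t in Set.Ioi (0:ℝ), {t : ℝ | t + r < a ∧ ¬ t < b}.indicator (fun _ => (1:ℝ≥0∞)) t
      = ENNReal.ofReal (a - b - r) := by
  have e : {t : ℝ | t + r < a ∧ ¬ t < b} = Set.Ico b (a - r) := by
    ext t; simp only [Set.mem_ofPred_eq, Set.mem_Ico, not_lt]
    constructor
    · rintro ⟨h1, h2⟩; exact ⟨h2, by linarith⟩
    · rintro ⟨h1, h2⟩; exact ⟨by linarith, h1⟩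
  rw [e, lintegral_indicator measurableSet_Ico, setLIntegral_one,
    Measure.restrict_congr_set Ioi_ae_eq_Ici, Measure.restrict_apply measurableSet_Ico,
    Set.inter_eq_left.2 (show Set.Ico b (a - r) ⊆ Set.Ici 0 from fun t ht => hb.trans ht.1), Real.volume_Ico]
  congr 1; ring

lemma pos_eq {n : ℕ} {f g : Euc n → ℝ} (hf : inV f) (hg : inV g) (r : ℝ) :
    ∫⁻ x, ENNReal.ofReal (f x - g x - r) =
      ∫⁻ t in Set.Ioi (0:ℝ), volume {x | t + r < f x ∧ ¬ t < g x} := by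
  have h1 : ∀ x, ENNReal.ofReal (f x - g x - r) = ∫⁻ t in Set.Ioi (0:ℝ),
      {q : Euc n × ℝ | q.2 + r < f q.1 ∧ ¬ q.2 < g q.1}.indicator (fun _ => (1:ℝ≥0∞)) (x, t) :=
    fun x => (slice (hg.2.1 x)).symm
  have hfm := hf.1
  have hgm := hg.1
  have hms : MeasurableSet {q : Euc n × ℝ | q.2 + r < f q.1 ∧ ¬ q.2 < g q.1} := by
    have a1 : MeasurableSet {q : Euc n × ℝ | q.2 + r < f q.1} :=
      measurableSet_lt (by fun_prop) (by fun_prop)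
    have a2 : MeasurableSet {q : Euc n × ℝ | q.2 < g q.1} :=
      measurableSet_lt (by fun_prop) (by fun_prop)
    exact a1.inter a2.compl
  simp_rw [h1]
  rw [lintegral_lintegral_swap]
  · refine lintegral_congr fun t => ?_
    have : (fun x => {q : Euc n × ℝ | q.2 + r < f q.1 ∧ ¬ q.2 < g q.1}.indicator
        (fun _ => (1:ℝ≥0∞)) (x, t)) = {x | t + r < f x ∧ ¬ t < g x}.indicator (fun _ => 1) := rfl
    rw [this, lintegral_indicator, setLIntegral_one]
    exact (measurableSet_lt measurable_const hfm).inter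
      (measurableSet_lt measurable_const hgm).compl
  · exact (measurable_const.indicator hms).aemeasurable

lemma pos_le {n : ℕ} {T : (Euc n → ℝ) → Euc n → ℝ} (hT : IsRearrangement T)
    {f g : Euc n → ℝ} (hf : inV f) (hg : inV g) {r : ℝ} (hr : 0 ≤ r) :
    ∫⁻ x, ENNReal.ofReal (T f x - T g x - r) ≤ ∫⁻ x, ENNReal.ofReal (f x - g x - r) := by
  rw [pos_eq hf hg, pos_eq (hT.1 f hf) (hT.1 g hg)]
  refine setLIntegral_mono' measurableSet_Ioi fun t ht => ?_
  have ht' : 0 < t := ht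
  exact diff_le hT hf hg (by linarith) ht'

lemma abs_split {a r : ℝ} (hr : 0 ≤ r) : ENNReal.ofReal (|a| - r) =
    ENNReal.ofReal (a - r) + ENNReal.ofReal (-a - r) := by
  rcases le_total 0 a with h | h
  · rw [abs_of_nonneg h, ENNReal.ofReal_of_nonpos (p := -a - r) (by linarith), add_zero]
  · rw [abs_of_nonpos h, ENNReal.ofReal_of_nonpos (p := a - r) (by linarith), zero_add]

lemma absdiff_le {n : ℕ} {T : (Euc n → ℝ) → Euc n → ℝ} (hT : IsRearrangement T)
    {f g : Euc n → ℝ} (hf : inV f) (hg : inV g) {r : ℝ} (hr : 0 ≤ r) :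
    ∫⁻ x, ENNReal.ofReal (|T f x - T g x| - r) ≤ ∫⁻ x, ENNReal.ofReal (|f x - g x| - r) := by
  have h1 := pos_le hT hf hg hr
  have h2 := pos_le hT hg hf hr
  have key : ∀ u v : Euc n → ℝ, inV u → inV v → ∫⁻ x, ENNReal.ofReal (|u x - v x| - r) =
      (∫⁻ x, ENNReal.ofReal (u x - v x - r)) + ∫⁻ x, ENNReal.ofReal (v x - u x - r) := by
    intro u v hu hv
    have := hu.1
    have := hv.1
    simp_rw [abs_split hr, neg_sub]
    rw [lintegral_add_left (by fun_prop)]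
  rw [key f g hf hg, key _ _ (hT.1 f hf) (hT.1 g hg)]
  exact add_le_add h1 h2

lemma pow_rep {q d : ℝ} (hq : 1 < q) (hd : 0 ≤ d) : ENNReal.ofReal (d ^ q) =
    ∫⁻ r in Set.Ioi (0:ℝ), ENNReal.ofReal (q * (q - 1) * r ^ (q - 2)) * ENNReal.ofReal (d - r) := by
  have hi1 : IntervalIntegrable (fun r : ℝ => r ^ (q - 2)) volume 0 d :=
    intervalIntegral.intervalIntegrable_rpow' (by linarith)
  have hi2 : IntervalIntegrable (fun r : ℝ => r ^ (q - 1)) volume 0 d :=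
    intervalIntegral.intervalIntegrable_rpow' (by linarith)
  have hI : ∫ r in (0:ℝ)..d, (q * (q - 1) * d * r ^ (q - 2) - q * (q - 1) * r ^ (q - 1)) = d ^ q := by
    rw [intervalIntegral.integral_sub (hi1.const_mul _) (hi2.const_mul _),
      intervalIntegral.integral_const_mul, intervalIntegral.integral_const_mul,
      integral_rpow (Or.inl (by linarith)), integral_rpow (Or.inl (by linarith)),
      Real.zero_rpow (by linarith), Real.zero_rpow (by linarith)]
    have e1 : q - 2 + 1 = q - 1 := by ring
    have e2 : q - 1 + 1 = q := by ring
    rw [e1, e2]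
    have h3 : d * d ^ (q - 1) = d ^ q := by
      rcases hd.eq_or_lt with h | h
      · rw [← h, zero_mul, Real.zero_rpow (by linarith)]
      · rw [Real.rpow_sub_one h.ne']; field_simp
    have : q - 1 ≠ 0 := by linarith
    have : q ≠ 0 := by linarith
    field_simp
    linear_combination q * h3
  have hii := (hi1.const_mul (q * (q - 1) * d)).sub (hi2.const_mul (q * (q - 1)))
  rw [intervalIntegrable_iff_integrableOn_Ioc_of_le hd] at hii
  have ept : ∀ r : ℝ, 0 < r → q * (q - 1) * d * r ^ (q - 2) - q * (q - 1) * r ^ (q - 1)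
      = (q * (q - 1) * r ^ (q - 2)) * (d - r) := by
    intro r hr
    have : r ^ (q - 1) = r ^ (q - 2) * r := by
      rw [← Real.rpow_add_one hr.ne']; congr 1; ring
    rw [this]; ring
  have hnn : ∀ r : ℝ, 0 < r → 0 ≤ q * (q - 1) * r ^ (q - 2) := by
    intro r hr
    have : 0 < q - 1 := by linarith
    positivity
  rw [← hI, intervalIntegral.integral_of_le hd, ofReal_integral_eq_lintegral_ofReal hii]
  · rw [← lintegral_indicator measurableSet_Ioc, ← lintegral_indicator measurableSet_Ioi]
    refine lintegral_congr fun r => ?_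
    by_cases hr : 0 < r
    · rw [Set.indicator_of_mem (show r ∈ Set.Ioi (0:ℝ) from hr)]
      by_cases hrd : r ≤ d
      · rw [Set.indicator_of_mem (show r ∈ Set.Ioc 0 d from ⟨hr, hrd⟩), ept r hr,
          ENNReal.ofReal_mul (hnn r hr)]
      · rw [Set.indicator_of_notMem (fun h => hrd h.2), ENNReal.ofReal_of_nonpos (p := d - r)
          (by linarith), mul_zero]
    · rw [Set.indicator_of_notMem (fun h => hr h.1), Set.indicator_of_notMem (show r ∉ Set.Ioi (0:ℝ) from hr)]
  · refine (ae_restrict_iff' measurableSet_Ioc).2 (ae_of_all _ fun r hr => ?_)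
    show 0 ≤ q * (q - 1) * d * r ^ (q - 2) - q * (q - 1) * r ^ (q - 1)
    rw [ept r hr.1]
    exact mul_nonneg (hnn r hr.1) (by linarith [hr.2])

lemma contr_pow {n : ℕ} {T : (Euc n → ℝ) → Euc n → ℝ} (hT : IsRearrangement T)
    {f g : Euc n → ℝ} (hf : inV f) (hg : inV g) {q : ℝ} (hq : 1 ≤ q) :
    ∫⁻ x, ENNReal.ofReal (|T f x - T g x| ^ q) ≤ ∫⁻ x, ENNReal.ofReal (|f x - g x| ^ q) := by
  rcases hq.eq_or_lt with h | h
  · subst h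
    simpa using absdiff_le hT hf hg le_rfl
  have key : ∀ u v : Euc n → ℝ, inV u → inV v → ∫⁻ x, ENNReal.ofReal (|u x - v x| ^ q) =
      ∫⁻ r in Set.Ioi (0:ℝ), ENNReal.ofReal (q * (q - 1) * r ^ (q - 2)) *
        ∫⁻ x, ENNReal.ofReal (|u x - v x| - r) := by
    intro u v hu hv
    have := hu.1
    have := hv.1
    simp_rw [pow_rep h (abs_nonneg _)]
    rw [lintegral_lintegral_swap]
    · refine lintegral_congr fun r => ?_
      rw [lintegral_const_mul]
      fun_prop
    · apply Measurable.aemeasurable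
      simp only [Function.uncurry_def]
      fun_prop
  rw [key f g hf hg, key _ _ (hT.1 f hf) (hT.1 g hg)]
  refine setLIntegral_mono' measurableSet_Ioi fun r hr => ?_
  have hr' : 0 ≤ r := le_of_lt hr
  exact mul_le_mul_right (absdiff_le hT hf hg hr') _

lemma contr {n : ℕ} {p : ℝ≥0∞} (hp1 : 1 ≤ p) (hp2 : p ≠ ⊤)
    {T : (Euc n → ℝ) → Euc n → ℝ} (hT : IsRearrangement T)
    {f g : Euc n → ℝ} (hf : inV f) (hg : inV g) :
    eLpNorm (T f - T g) p volume ≤ eLpNorm (f - g) p volume := by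
  have hp0 : p ≠ 0 := (lt_of_lt_of_le zero_lt_one hp1).ne'
  have hq : 1 ≤ p.toReal := by
    simpa using (ENNReal.toReal_le_toReal ENNReal.one_ne_top hp2).2 hp1
  have e : ∀ y : ℝ, ‖y‖ₑ ^ p.toReal = ENNReal.ofReal (|y| ^ p.toReal) := by
    intro y
    rw [Real.enorm_eq_ofReal_abs, ENNReal.ofReal_rpow_of_nonneg (abs_nonneg _) (by linarith)]
  have key : ∀ u v : Euc n → ℝ, eLpNorm (u - v) p volume =
      (∫⁻ x, ENNReal.ofReal (|u x - v x| ^ p.toReal)) ^ (1 / p.toReal) := by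
    intro u v
    rw [eLpNorm_eq_lintegral_rpow_enorm_toReal hp0 hp2]
    simp_rw [e, Pi.sub_apply]
  rw [key, key]
  exact ENNReal.rpow_le_rpow (contr_pow hT hf hg hq) (by positivity)

lemma tri {n : ℕ} {p : ℝ≥0∞} (hp1 : 1 ≤ p) (hp2 : p ≠ ⊤)
    {R T : (Euc n → ℝ) → Euc n → ℝ} (hR : IsRearrangement R) (hT : IsRearrangement T)
    {f g : Euc n → ℝ} (hf : inV f) (hg : inV g) :
    eLpNorm (R f - T f) p volume ≤
      eLpNorm (f - g) p volume + eLpNorm (R g - T g) p volume + eLpNorm (f - g) p volume := by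
  have m1 := (hR.1 f hf).1
  have m2 := (hR.1 g hg).1
  have m3 := (hT.1 f hf).1
  have m4 := (hT.1 g hg).1
  have e : R f - T f = (R f - R g) + (R g - T g) + (T g - T f) := by abel
  rw [e]
  refine (eLpNorm_add_le ((m1.sub m2).add (m2.sub m4)).aestronglyMeasurable
    (m4.sub m3).aestronglyMeasurable hp1).trans ?_
  gcongr
  · refine (eLpNorm_add_le (m1.sub m2).aestronglyMeasurable
      (m2.sub m4).aestronglyMeasurable hp1).trans ?_
    gcongr
    exact contr hp1 hp2 hR hf hg
  · rw [eLpNorm_sub_comm]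
    exact contr hp1 hp2 hT hf hg

lemma subset_cl {n : ℕ} {p : ℝ≥0∞} {X : Set (Euc n → ℝ)} (hX : ∀ f ∈ X, inLpPlus p f) :
    X ⊆ clLp p X := fun f hf => ⟨hX f hf, fun ε hε => ⟨f, hf, by simpa using hε⟩⟩

lemma approx_step {n : ℕ} {p : ℝ≥0∞} (hp1 : 1 ≤ p) (hp2 : p ≠ ⊤)
    {X : Set (Euc n → ℝ)} (hX : ∀ f ∈ X, inLpPlus p f)
    {T : (Euc n → ℝ) → Euc n → ℝ} (hT : IsRearrangement T)
    {S : ℕ → (Euc n → ℝ) → Euc n → ℝ} (hS : ∀ k, IsRearrangement (S k))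
    (h : ∀ f ∈ X, Tendsto (fun k => eLpNorm (S k f - T f) p volume) atTop (𝓝 0)) :
    ∀ f ∈ clLp p X, Tendsto (fun k => eLpNorm (S k f - T f) p volume) atTop (𝓝 0) := by
  intro f hf
  rw [ENNReal.tendsto_nhds_zero]
  intro ε hε
  have h3 : 0 < ε / 3 := ENNReal.div_pos hε.ne' (by norm_num)
  obtain ⟨g, hg, hfg⟩ := hf.2 (ε / 3) h3
  filter_upwards [(ENNReal.tendsto_nhds_zero.1 (h g hg)) (ε / 3) h3] with k hk
  refine (tri hp1 hp2 (hS k) hT (lpPlus_inV hp1 hp2 hf.1)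
    (lpPlus_inV hp1 hp2 (hX g hg))).trans ?_
  rw [← ENNReal.add_thirds ε]
  gcongr

theorem stmt17 {n : ℕ} (p : ℝ≥0∞) (hp1 : 1 ≤ p) (hp2 : p ≠ ⊤)
    (X : Set (Euc n → ℝ)) (hX : ∀ f ∈ X, inLpPlus p f)
    (T : (Euc n → ℝ) → Euc n → ℝ) (hT : IsRearrangement T)
    (𝒲 : Set ((Euc n → ℝ) → Euc n → ℝ)) (h𝒲 : ∀ W ∈ 𝒲, IsRearrangement W) :
    (WeakApproxLp p T 𝒲 X ↔ WeakApproxLp p T 𝒲 (clLp p X)) ∧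
    (ApproxLp p T 𝒲 X ↔ ApproxLp p T 𝒲 (clLp p X)) ∧
    (SeqApproxLp p T 𝒲 X ↔ SeqApproxLp p T 𝒲 (clLp p X)) := by
  have hsub := subset_cl hX
  refine ⟨⟨fun h f hf => ?_, fun h f hf => h f (hsub hf)⟩,
    ⟨fun ⟨S, hS, h⟩ => ⟨S, hS, ?_⟩, fun ⟨S, hS, h⟩ => ⟨S, hS, fun f hf => h f (hsub hf)⟩⟩,
    ⟨fun ⟨S, hS, h⟩ => ⟨S, hS, ?_⟩, fun ⟨S, hS, h⟩ => ⟨S, hS, fun f hf => h f (hsub hf)⟩⟩⟩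
  · have key : ∀ ε : ℝ≥0∞, 0 < ε → ∃ W ∈ 𝒲, eLpNorm (W f - T f) p volume ≤ ε := by
      intro ε hε
      have h3 : 0 < ε / 3 := ENNReal.div_pos hε.ne' (by norm_num)
      obtain ⟨g, hg, hfg⟩ := hf.2 (ε / 3) h3
      obtain ⟨S, hS, hl⟩ := h g hg
      obtain ⟨k, hk⟩ := ((ENNReal.tendsto_nhds_zero.1 hl) (ε / 3) h3).exists
      refine ⟨S k, hS k, (tri hp1 hp2 (h𝒲 _ (hS k)) hT (lpPlus_inV hp1 hp2 hf.1)
        (lpPlus_inV hp1 hp2 (hX g hg))).trans ?_⟩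
      rw [← ENNReal.add_thirds ε]
      gcongr
    have hpos : ∀ k : ℕ, (0:ℝ≥0∞) < (k:ℝ≥0∞)⁻¹ := fun k =>
      ENNReal.inv_pos.2 (ENNReal.natCast_ne_top k)
    choose S hS hl using fun k : ℕ => key _ (hpos k)
    exact ⟨S, hS, tendsto_of_tendsto_of_tendsto_of_le_of_le tendsto_const_nhds
      ENNReal.tendsto_inv_nat_nhds_zero (fun k => zero_le) hl⟩
  · exact approx_step hp1 hp2 hX hT (fun k => h𝒲 _ (hS k)) h
  · refine approx_step hp1 hp2 hX hT (fun k => ?_) h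
    induction k with
    | zero => exact h𝒲 _ (hS 0)
    | succ k ih => exact rearr_comp (h𝒲 _ (hS (k + 1))) ih
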